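/- For every K > 0 there exists Λ > λ₀ such that whenever λ > Λ and μ ≥ 0 satisfy Ξ(λ, μ) = 0, then μ > K·λ. -/

import Mathlib

open Set

/-!
Let `(a y')' = q y` with `a, q ≥ 0` and `y(α) = 0`. Both `a y' · y` and `(a y')²` are then
nondecreasing, so the flux `a y'` is largest in absolute value at the right endpoint `β`. If
`a ≥ m > 0`, then `|y'| ≤ |a y'|(β) / m`, and integrating gives `m |y(β)| ≤ |a y'|(β) (β - α)`.
Unless `y` is trivial, a boundary condition `a y' = G y` at `β` therefore forces `m ≤ |G| (β - α)`.
With `m = (λ - 2 max Γ)^{3/2}` and `G = g + σ μ`, a zero of `Ξ` makes `μ` grow at least like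
`λ^{3/2}`, hence faster than any `K λ`.
-/

open Filter

/-- `y` solves the Sturm–Liouville equation `(a y')' = q y` on `[α, β]`, where `y'` is its
derivative (one-sided at the endpoints) and is continuous up to the boundary. The equation itself is
only required in the open interval. -/
structure IsSturmLiouvilleSolution (a q : ℝ → ℝ) (α β : ℝ) (y y' : ℝ → ℝ) : Prop where
  hasDerivWithinAt : ∀ p ∈ Icc α β, HasDerivWithinAt y (y' p) (Icc α β) p
  continuousOn_deriv : ContinuousOn y' (Icc α β)
  hasDerivAt_flux : ∀ p ∈ Ioo α β, HasDerivAt (fun s => a s * y' s) (q p * y p) p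

namespace IsSturmLiouvilleSolution

variable {a q y y' : ℝ → ℝ} {α β : ℝ}

lemma continuousOn (h : IsSturmLiouvilleSolution a q α β y y') : ContinuousOn y (Icc α β) :=
  fun p hp => (h.hasDerivWithinAt p hp).continuousWithinAt

lemma hasDerivAt (h : IsSturmLiouvilleSolution a q α β y y') {p : ℝ} (hp : p ∈ Ioo α β) :
    HasDerivAt y (y' p) p :=
  (h.hasDerivWithinAt p (Ioo_subset_Icc_self hp)).hasDerivAt (Icc_mem_nhds hp.1 hp.2)

lemma monotoneOn_flux_mul (h : IsSturmLiouvilleSolution a q α β y y')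
    (ha : ContinuousOn a (Icc α β)) (ha₀ : ∀ p ∈ Icc α β, 0 ≤ a p)
    (hq : ∀ p ∈ Icc α β, 0 ≤ q p) :
    MonotoneOn (fun p => a p * y' p * y p) (Icc α β) := by
  refine monotoneOn_of_hasDerivWithinAt_nonneg
    (f' := fun p => q p * y p * y p + a p * y' p * y' p) (convex_Icc α β)
    ((ha.mul h.continuousOn_deriv).mul h.continuousOn) ?_ ?_ <;>
    rw [interior_Icc] <;> intro p hp
  · exact ((h.hasDerivAt_flux p hp).mul (h.hasDerivAt hp)).hasDerivWithinAt
  · have hap := ha₀ p (Ioo_subset_Icc_self hp)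
    have hqp := hq p (Ioo_subset_Icc_self hp)
    simp only [mul_assoc]
    exact add_nonneg (mul_nonneg hqp (mul_self_nonneg _)) (mul_nonneg hap (mul_self_nonneg _))

lemma flux_mul_nonneg (h : IsSturmLiouvilleSolution a q α β y y')
    (ha : ContinuousOn a (Icc α β)) (ha₀ : ∀ p ∈ Icc α β, 0 ≤ a p)
    (hq : ∀ p ∈ Icc α β, 0 ≤ q p) (hy : y α = 0) {p : ℝ} (hp : p ∈ Icc α β) :
    0 ≤ a p * y' p * y p := by
  simpa only [hy, mul_zero] using
    h.monotoneOn_flux_mul ha ha₀ hq (left_mem_Icc.mpr (hp.1.trans hp.2)) hp hp.1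

lemma monotoneOn_flux_sq (h : IsSturmLiouvilleSolution a q α β y y')
    (ha : ContinuousOn a (Icc α β)) (ha₀ : ∀ p ∈ Icc α β, 0 ≤ a p)
    (hq : ∀ p ∈ Icc α β, 0 ≤ q p) (hy : y α = 0) :
    MonotoneOn (fun p => (a p * y' p) ^ 2) (Icc α β) := by
  refine monotoneOn_of_hasDerivWithinAt_nonneg
    (f' := fun p => 2 * (q p * (a p * y' p * y p))) (convex_Icc α β)
    ((ha.mul h.continuousOn_deriv).pow 2) ?_ ?_ <;>
    rw [interior_Icc] <;> intro p hp
  · refine (((h.hasDerivAt_flux p hp).pow 2).congr_deriv ?_).hasDerivWithinAt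
    push_cast
    ring
  · have hp' := Ioo_subset_Icc_self hp
    exact mul_nonneg zero_le_two (mul_nonneg (hq p hp') (h.flux_mul_nonneg ha ha₀ hq hy hp'))

lemma monotoneOn_abs_flux (h : IsSturmLiouvilleSolution a q α β y y')
    (ha : ContinuousOn a (Icc α β)) (ha₀ : ∀ p ∈ Icc α β, 0 ≤ a p)
    (hq : ∀ p ∈ Icc α β, 0 ≤ q p) (hy : y α = 0) :
    MonotoneOn (fun p => |a p * y' p|) (Icc α β) :=
  fun _ hp _ hr hpr => sq_le_sq.mp (h.monotoneOn_flux_sq ha ha₀ hq hy hp hr hpr)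

lemma abs_right_le (h : IsSturmLiouvilleSolution a q α β y y') (hαβ : α ≤ β)
    (ha : ContinuousOn a (Icc α β)) {m : ℝ} (hm : 0 < m) (hma : ∀ p ∈ Icc α β, m ≤ a p)
    (hq : ∀ p ∈ Icc α β, 0 ≤ q p) (hy : y α = 0) :
    |y β| ≤ |a β * y' β| / m * (β - α) := by
  have hβ : β ∈ Icc α β := right_mem_Icc.mpr hαβ
  have ha₀ : ∀ p ∈ Icc α β, 0 ≤ a p := fun p hp => hm.le.trans (hma p hp)
  have deriv_bound : ∀ p ∈ Icc α β, ‖y' p‖ ≤ |a β * y' β| / m := fun p hp => by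
    rw [Real.norm_eq_abs, le_div_iff₀' hm]
    calc m * |y' p| ≤ a p * |y' p| := by gcongr; exact hma p hp
      _ = |a p * y' p| := by rw [abs_mul, abs_of_nonneg (ha₀ p hp)]
      _ ≤ |a β * y' β| := h.monotoneOn_abs_flux ha ha₀ hq hy hp hβ hp.2
  simpa only [hy, sub_zero, Real.norm_eq_abs, abs_of_nonneg (sub_nonneg.mpr hαβ)] using
    (convex_Icc α β).norm_image_sub_le_of_norm_hasDerivWithin_le h.hasDerivWithinAt deriv_bound
      (left_mem_Icc.mpr hαβ) hβ

lemma le_abs_mul_of_robin (h : IsSturmLiouvilleSolution a q α β y y') (hαβ : α ≤ β)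
    (ha : ContinuousOn a (Icc α β)) {m : ℝ} (hm : 0 < m) (hma : ∀ p ∈ Icc α β, m ≤ a p)
    (hq : ∀ p ∈ Icc α β, 0 ≤ q p) (hy : y α = 0) (hy' : y' α ≠ 0) {G : ℝ}
    (hG : a β * y' β = G * y β) :
    m ≤ |G| * (β - α) := by
  have hα : α ∈ Icc α β := left_mem_Icc.mpr hαβ
  have ha₀ : ∀ p ∈ Icc α β, 0 ≤ a p := fun p hp => hm.le.trans (hma p hp)
  have flux_pos : 0 < |a β * y' β| :=
    (abs_pos.mpr (mul_ne_zero (hm.trans_le (hma α hα)).ne' hy')).trans_le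
      (h.monotoneOn_abs_flux ha ha₀ hq hy hα (right_mem_Icc.mpr hαβ) hαβ)
  refine le_of_mul_le_mul_left ?_ flux_pos
  calc |a β * y' β| * m = |G| * |y β| * m := by rw [hG, abs_mul]
    _ ≤ |G| * (|a β * y' β| / m * (β - α)) * m := by
        gcongr
        exact h.abs_right_le hαβ ha hm hma hq hy
    _ = |a β * y' β| * (|G| * (β - α)) := by field_simp

end IsSturmLiouvilleSolution

lemma eventually_add_mul_sq_lt_pow_three (A B : ℝ) : ∀ᶠ x : ℝ in atTop, A + B * x ^ 2 < x ^ 3 := by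
  filter_upwards [eventually_gt_atTop (|A| + |B|), eventually_ge_atTop 1] with x hx hx₁
  calc A + B * x ^ 2 ≤ |A| * x ^ 2 + |B| * x ^ 2 := by
        gcongr
        · exact (le_abs_self A).trans (le_mul_of_one_le_right (abs_nonneg A) (one_le_pow₀ hx₁))
        · exact le_abs_self B
    _ = (|A| + |B|) * x ^ 2 := by ring
    _ < x * x ^ 2 := by gcongr
    _ = x ^ 3 := by ring

lemma eventually_add_mul_lt_sqrt_sub_pow_three (A B c : ℝ) :
    ∀ᶠ x : ℝ in atTop, A + B * x < √(x - c) ^ 3 := by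
  have tendsto_sqrt_sub : Tendsto (fun x : ℝ => √(x - c)) atTop atTop :=
    Real.tendsto_sqrt_atTop.comp (tendsto_atTop_add_const_right atTop (-c) tendsto_id)
  filter_upwards [tendsto_sqrt_sub.eventually (eventually_add_mul_sq_lt_pow_three (A + B * c) B),
    eventually_ge_atTop c] with x hx hcx
  rw [Real.sq_sqrt (sub_nonneg.mpr hcx)] at hx
  linarith

theorem stmt_14_general {α β : ℝ} (hαβ : α ≤ β) {Γ : ℝ → ℝ} (hΓ : ContinuousOn Γ (Icc α β))
    (g σ C : ℝ) :
    ∀ᶠ lam in atTop, ∀ μ : ℝ, 0 ≤ μ → ∀ y y' : ℝ → ℝ,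
      IsSturmLiouvilleSolution (fun p => √(lam - 2 * Γ p) ^ 3) (fun p => μ * √(lam - 2 * Γ p))
        α β y y' →
      y α = 0 → y' α ≠ 0 → √(lam - 2 * Γ β) ^ 3 * y' β = (g + σ * μ) * y β → C * lam < μ := by
  obtain ⟨M, hM⟩ := isCompact_Icc.bddAbove_image hΓ
  filter_upwards [eventually_gt_atTop (2 * M), eventually_add_mul_lt_sqrt_sub_pow_three
    (|g| * (β - α)) (|σ| * C * (β - α)) (2 * M)] with lam hlam growth μ hμ y y' hsol hy hy' hΞ
  by_contra! hμC
  have sqrt_le : ∀ p ∈ Icc α β, √(lam - 2 * M) ≤ √(lam - 2 * Γ p) := fun p hp => by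
    gcongr
    exact hM (mem_image_of_mem Γ hp)
  have lower_bound : √(lam - 2 * M) ^ 3 ≤ |g + σ * μ| * (β - α) :=
    hsol.le_abs_mul_of_robin hαβ (by fun_prop) (pow_pos (Real.sqrt_pos.mpr (sub_pos.mpr hlam)) 3)
      (fun p hp => pow_le_pow_left₀ (Real.sqrt_nonneg _) (sqrt_le p hp) 3)
      (fun p _ => mul_nonneg hμ (Real.sqrt_nonneg _)) hy hy' hΞ
  have upper_bound : |g + σ * μ| ≤ |g| + |σ| * (C * lam) :=
    calc |g + σ * μ| ≤ |g| + |σ * μ| := abs_add_le g (σ * μ)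
      _ = |g| + |σ| * μ := by rw [abs_mul, abs_of_nonneg hμ]
      _ ≤ |g| + |σ| * (C * lam) := by gcongr
  have := mul_le_mul_of_nonneg_right upper_bound (sub_nonneg.mpr hαβ)
  linarith

/-- For every `K > 0` there exists `Λ > λ₀` such that whenever `λ > Λ` and
`μ ≥ 0` satisfy `Ξ(λ,μ) = 0`, then `μ > K·λ`, where
`Ξ(λ,μ) := λ^{3/2} z′(0;λ,μ) − (g+σμ) z(0;λ,μ)` and `z(·;λ,μ)` solves the Sturm–Liouville
initial value problem with `b(p;λ) = √(λ − 2Γ(p))`. -/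
theorem stmt_14 (p₀ g σ lam₀ : ℝ) (hp₀ : p₀ < 0) (hg : 0 < g) (hσ : 0 < σ)
    (Γ : ℝ → ℝ) (K : NNReal) (hΓ : LipschitzOnWith K Γ (Set.Icc p₀ 0)) (hΓ0 : Γ 0 = 0)
    (hlam₀ : 2 * sSup (Γ '' Set.Icc p₀ 0) < lam₀)
    (hlam₀' : g * ∫ p in p₀..0, (Real.sqrt (lam₀ - 2 * Γ p) ^ 3)⁻¹ = 1)
    (z z' : ℝ → ℝ → ℝ → ℝ)
    (hz : ∀ lam : ℝ, 2 * sSup (Γ '' Set.Icc p₀ 0) < lam → ∀ μ : ℝ, 0 ≤ μ →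
      ∀ p ∈ Set.Icc p₀ 0, HasDerivWithinAt (z lam μ) (z' lam μ p) (Set.Icc p₀ 0) p)
    (hzc : ∀ lam : ℝ, 2 * sSup (Γ '' Set.Icc p₀ 0) < lam → ∀ μ : ℝ, 0 ≤ μ →
      ContinuousOn (z' lam μ) (Set.Icc p₀ 0))
    (hz0 : ∀ lam : ℝ, 2 * sSup (Γ '' Set.Icc p₀ 0) < lam → ∀ μ : ℝ, 0 ≤ μ →
      z lam μ p₀ = 0)
    (hz1 : ∀ lam : ℝ, 2 * sSup (Γ '' Set.Icc p₀ 0) < lam → ∀ μ : ℝ, 0 ≤ μ →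
      z' lam μ p₀ = 1)
    (hzode : ∀ lam : ℝ, 2 * sSup (Γ '' Set.Icc p₀ 0) < lam → ∀ μ : ℝ, 0 ≤ μ →
      ∀ p ∈ Set.Ioo p₀ 0,
        HasDerivAt (fun s => Real.sqrt (lam - 2 * Γ s) ^ 3 * z' lam μ s)
          (μ * Real.sqrt (lam - 2 * Γ p) * z lam μ p) p) :
    ∀ C : ℝ, 0 < C → ∃ Λ : ℝ, lam₀ < Λ ∧
      ∀ lam : ℝ, Λ < lam → ∀ μ : ℝ, 0 ≤ μ →
        Real.sqrt lam ^ 3 * z' lam μ 0 - (g + σ * μ) * z lam μ 0 = 0 →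
          C * lam < μ := by
  intro C _
  obtain ⟨Λ, hΛ⟩ := eventually_atTop.mp (stmt_14_general hp₀.le hΓ.continuousOn g σ C)
  refine ⟨max Λ lam₀ + 1, by linarith [le_max_right Λ lam₀], fun lam hlam μ hμ hΞ => ?_⟩
  have hlamS := hlam₀.trans (show lam₀ < lam by linarith [le_max_right Λ lam₀])
  exact hΛ lam (by linarith [le_max_left Λ lam₀]) μ hμ (z lam μ) (z' lam μ)
    ⟨hz lam hlamS μ hμ, hzc lam hlamS μ hμ, hzode lam hlamS μ hμ⟩ (hz0 lam hlamS μ hμ)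
    (hz1 lam hlamS μ hμ ▸ one_ne_zero) (by simpa [hΓ0] using sub_eq_zero.mp hΞ)
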